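/- Let p ≥ 6, u = 2^(1−p), and let o_x, o_y ∈ [1, 1/(8u) − 2]. Let x_h, x_l, y_h, y_l ∈ F_p satisfy |x_l| ≤ o_x·u·|x_h| and |y_l| ≤ o_y·u·|y_h|. In any execution of sloppy double-word addition in faithful rounding, if |w| > |s_h| then the concluding Fast2Sum (normalization) step is error-free: z_h + z_l = s_h + w exactly. -/

import Mathlib

/-!
The inequality `|w| > |sh|` forces cancellation in `xh + yh`. Indeed, if `|xh|` and `|yh|` are both
at most `2 * |xh + yh|`, then the relative error bound `1 / 32` of each faithful rounding, together
with `|xl| ≤ |xh| / 8` and `|yl| ≤ |yh| / 8`, gives `|w| ≤ |sh|` (`abs_w_le_of_no_cancellation`).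

Otherwise `xh` and `yh` have opposite signs and are within a factor of two of each other. Writing
`2 ^ g` for the smaller of their units in the last place, `xh + yh` is a multiple of `2 ^ g` and is
representable (Sterbenz), so `sh = xh + yh`, `sl = 0` and `w = v`. Since `v` is of the order of
`(|xh| + |yh|) / 8`, it is smaller than `2 ^ p * 2 ^ g`, so its unit in the last place `2 ^ k`
divides `2 ^ g`, and hence `sh` is a multiple of it. Finally, if `sh` is a multiple of the unit
`2 ^ k` of `w` and `|sh| < |w|`, the error of `sh + w` is `0` or one unit `±2 ^ k`; therefore
`zh - sh` and `w - d` are representable, and Fast2Sum is exact (`fast2Sum_exact`).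
-/

/-- The radix-2, precision-`p` floating-point numbers with unlimited exponent range. -/
def Fp (p : ℕ) : Set ℝ := {x : ℝ | ∃ M e : ℤ, |M| ≤ 2 ^ p - 1 ∧ x = (M : ℝ) * (2 : ℝ) ^ e}

/-- Round toward `-∞`: the largest floating-point number `≤ x`. -/
noncomputable def RD (p : ℕ) (x : ℝ) : ℝ := sSup {f : ℝ | f ∈ Fp p ∧ f ≤ x}

/-- Round toward `+∞`: the smallest floating-point number `≥ x`. -/
noncomputable def RU (p : ℕ) (x : ℝ) : ℝ := sInf {f : ℝ | f ∈ Fp p ∧ x ≤ f}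

/-- `y` is a faithful rounding of `x`. -/
def Faithful (p : ℕ) (x y : ℝ) : Prop := y = RD p x ∨ y = RU p x

/-- All hypotheses of one execution of the sloppy double-word addition algorithm
(`2Sum(x_h,y_h)`, `v = ∘(x_l+y_l)`, `w = ∘(s_l+v)`, `Fast2Sum(s_h,w)`) in faithful
rounding, each rounding chosen independently. -/
def SloppyFaithful (p : ℕ) (xh xl yh yl sh a' b' da db sl v w zh d zl : ℝ) : Prop :=
  Faithful p (xh + yh) sh ∧ Faithful p (sh - yh) a' ∧ Faithful p (sh - a') b' ∧
  Faithful p (xh - a') da ∧ Faithful p (yh - b') db ∧ Faithful p (da + db) sl ∧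
  Faithful p (xl + yl) v ∧ Faithful p (sl + v) w ∧
  Faithful p (sh + w) zh ∧ Faithful p (zh - sh) d ∧ Faithful p (w - d) zl

/-! ### Faithful rounding -/

lemma mem_Fp_of_abs_le {p : ℕ} (hp : 1 ≤ p) {M : ℤ} (e : ℤ) (hM : |M| ≤ 2 ^ p) :
    (M : ℝ) * (2 : ℝ) ^ e ∈ Fp p := by
  have h2 : (2 : ℤ) ≤ 2 ^ p := by
    calc (2 : ℤ) = 2 ^ 1 := by norm_num
      _ ≤ 2 ^ p := pow_le_pow_right₀ (by norm_num) hp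
  rcases hM.lt_or_eq with h | h
  · exact ⟨M, e, by omega, rfl⟩
  · -- `±2 ^ p` does not fit as a significand, but it is a power of two.
    have hpow : (2 : ℝ) ^ (e + p) = (2 : ℝ) ^ p * (2 : ℝ) ^ e := by
      rw [zpow_add₀ (by norm_num), zpow_natCast, mul_comm]
    rcases (abs_eq (by positivity)).1 h with h | h
    · refine ⟨1, e + p, by rw [abs_one]; omega, ?_⟩
      rw [h, hpow]; push_cast; ring
    · refine ⟨-1, e + p, by rw [abs_neg, abs_one]; omega, ?_⟩
      rw [h, hpow]; push_cast; ring

lemma neg_mem_Fp {p : ℕ} {x : ℝ} (h : x ∈ Fp p) : -x ∈ Fp p := by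
  obtain ⟨M, e, hM, rfl⟩ := h
  exact ⟨-M, e, by rwa [abs_neg], by push_cast; ring⟩

lemma RU_eq_neg_RD (p : ℕ) (x : ℝ) : RU p x = -RD p (-x) := by
  unfold RU RD
  rw [Real.sInf_def]
  congr 2
  ext f
  simp only [Set.mem_neg, Set.mem_ofPred_eq]
  constructor
  · rintro ⟨h1, h2⟩
    exact ⟨by simpa using neg_mem_Fp h1, by linarith⟩
  · rintro ⟨h1, h2⟩
    exact ⟨neg_mem_Fp h1, by linarith⟩

lemma RD_eq_self {p : ℕ} {x : ℝ} (h : x ∈ Fp p) : RD p x = x :=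
  IsGreatest.csSup_eq ⟨⟨h, le_rfl⟩, fun _ hf => hf.2⟩

lemma Faithful.eq_of_mem {p : ℕ} {x y : ℝ} (h : Faithful p x y) (hx : x ∈ Fp p) : y = x := by
  rcases h with h | h
  · rw [h, RD_eq_self hx]
  · rw [h, RU_eq_neg_RD, RD_eq_self (neg_mem_Fp hx), neg_neg]

/-- On the binade `2 ^ (p - 1) * 2 ^ e ≤ |x| < 2 ^ p * 2 ^ e` the floating-point numbers are the
multiples of `2 ^ e`, so that rounding down is a floor. -/
lemma RD_eq_floor {p : ℕ} (hp : 1 ≤ p) {x : ℝ} {e : ℤ}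
    (h1 : (2 : ℝ) ^ (p - 1) * 2 ^ e ≤ |x|) (h2 : |x| < (2 : ℝ) ^ p * 2 ^ e) :
    RD p x = (⌊x / 2 ^ e⌋ : ℝ) * 2 ^ e ∧ |⌊x / 2 ^ e⌋| ≤ 2 ^ p := by
  have he : (0 : ℝ) < 2 ^ e := by positivity
  have hlt : |x / 2 ^ e| < 2 ^ p := by
    rw [abs_div, abs_of_pos he, div_lt_iff₀ he]; exact h2
  rw [abs_lt] at hlt
  have hM : |⌊x / 2 ^ e⌋| ≤ 2 ^ p := by
    rw [abs_le]
    constructor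
    · rw [Int.le_floor]; push_cast; exact hlt.1.le
    · have : ⌊x / 2 ^ e⌋ < 2 ^ p := by rw [Int.floor_lt]; push_cast; exact hlt.2
      exact this.le
  refine ⟨IsGreatest.csSup_eq ⟨⟨mem_Fp_of_abs_le hp e hM, ?_⟩, ?_⟩, hM⟩
  · rw [← le_div_iff₀ he]; exact Int.floor_le _
  · rintro g ⟨⟨M, j, hMj, rfl⟩, hg⟩
    rcases le_or_gt e j with hj | hj
    · obtain ⟨n, rfl⟩ := Int.le.dest hj
      have hE : (M : ℝ) * 2 ^ (e + (n : ℤ)) = ((M * 2 ^ n : ℤ) : ℝ) * 2 ^ e := by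
        rw [zpow_add₀ (by norm_num), zpow_natCast]; push_cast; ring
      rw [hE] at hg ⊢
      refine mul_le_mul_of_nonneg_right ?_ he.le
      exact_mod_cast Int.le_floor.2 ((le_div_iff₀ he).2 hg)
    · -- A number with a smaller exponent lies strictly below the binade in absolute value.
      have hMr : |(M : ℝ)| < 2 ^ p := by
        have : |M| < 2 ^ p := by omega
        exact_mod_cast this
      have hjj : (2 : ℝ) ^ j ≤ 2 ^ (e - 1) := zpow_le_zpow_right₀ (by norm_num) (by omega)
      have hee : (2 : ℝ) ^ e = 2 * 2 ^ (e - 1) := by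
        rw [zpow_sub_one₀ (by norm_num)]; ring
      have hpp : (2 : ℝ) ^ p = 2 * 2 ^ (p - 1) := by
        rw [← pow_succ']; congr 1; omega
      have hsmall : |(M : ℝ) * 2 ^ j| < 2 ^ (p - 1) * 2 ^ e := by
        rw [abs_mul, abs_of_pos (by positivity : (0 : ℝ) < 2 ^ j)]
        calc |(M : ℝ)| * 2 ^ j < 2 ^ p * 2 ^ j :=
              mul_lt_mul_of_pos_right hMr (by positivity)
          _ ≤ 2 ^ p * 2 ^ (e - 1) := mul_le_mul_of_nonneg_left hjj (by positivity)
          _ = 2 ^ (p - 1) * 2 ^ e := by rw [hpp, hee]; ring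
      rw [abs_lt] at hsmall
      rcases le_abs.1 h1 with hx | hx
      · refine hsmall.2.le.trans (mul_le_mul_of_nonneg_right ?_ he.le)
        have : (2 : ℤ) ^ (p - 1) ≤ ⌊x / 2 ^ e⌋ := by
          rw [Int.le_floor, le_div_iff₀ he]; push_cast; exact hx
        exact_mod_cast this
      · linarith [hsmall.1]

/-- A faithful rounding of a number in the binade of exponent `e` is a multiple of the unit
`2 ^ e` in the last place, at distance less than one unit. -/
lemma Faithful.spec {p : ℕ} (hp : 1 ≤ p) {x y : ℝ} (h : Faithful p x y) {e : ℤ}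
    (h1 : (2 : ℝ) ^ (p - 1) * 2 ^ e ≤ |x|) (h2 : |x| < (2 : ℝ) ^ p * 2 ^ e) :
    ∃ N : ℤ, y = N * 2 ^ e ∧ |N| ≤ 2 ^ p ∧ |y - x| < 2 ^ e := by
  have he : (0 : ℝ) < 2 ^ e := by positivity
  have key : ∀ z : ℝ, |(⌊z / 2 ^ e⌋ : ℝ) * 2 ^ e - z| < 2 ^ e := by
    intro z
    have h3 := Int.floor_le (z / 2 ^ e)
    have h4 := Int.lt_floor_add_one (z / 2 ^ e)
    rw [le_div_iff₀ he] at h3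
    rw [div_lt_iff₀ he] at h4
    rw [abs_lt]
    constructor <;> linarith
  rcases h with h | h
  · obtain ⟨h3, h4⟩ := RD_eq_floor hp h1 h2
    rw [h, h3]
    exact ⟨_, rfl, h4, key x⟩
  · obtain ⟨h3, h4⟩ := RD_eq_floor (x := -x) hp (by rwa [abs_neg]) (by rwa [abs_neg])
    rw [h, RU_eq_neg_RD, h3]
    refine ⟨-⌊-x / 2 ^ e⌋, by push_cast; ring, by rwa [abs_neg], ?_⟩
    rw [← abs_neg]
    convert key (-x) using 2
    ring

lemma exists_binade {p : ℕ} (hp : 1 ≤ p) {x : ℝ} (hx : x ≠ 0) :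
    ∃ e : ℤ, (2 : ℝ) ^ (p - 1) * 2 ^ e ≤ |x| ∧ |x| < (2 : ℝ) ^ p * 2 ^ e := by
  obtain ⟨k, hk1, hk2⟩ := exists_mem_Ico_zpow (abs_pos.2 hx) (by norm_num : (1 : ℝ) < 2)
  refine ⟨k - (p - 1 : ℕ), ?_, ?_⟩
  · rw [← zpow_natCast, ← zpow_add₀ (by norm_num)]
    rwa [show ((p - 1 : ℕ) : ℤ) + (k - (p - 1 : ℕ)) = k by ring]
  · rw [← zpow_natCast, ← zpow_add₀ (by norm_num)]
    rwa [show (p : ℤ) + (k - (p - 1 : ℕ)) = k + 1 by omega]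

lemma zero_mem_Fp (p : ℕ) : (0 : ℝ) ∈ Fp p :=
  ⟨0, 0, by have : (1 : ℤ) ≤ 2 ^ p := one_le_pow₀ (by norm_num)
            rw [abs_zero]; omega, by simp⟩

lemma Faithful.mem {p : ℕ} (hp : 1 ≤ p) {x y : ℝ} (h : Faithful p x y) : y ∈ Fp p := by
  by_cases hx : x = 0
  · subst hx
    rw [h.eq_of_mem (zero_mem_Fp p)]
    exact zero_mem_Fp p
  · obtain ⟨e, h1, h2⟩ := exists_binade hp hx
    obtain ⟨N, rfl, hN, -⟩ := h.spec hp h1 h2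
    exact mem_Fp_of_abs_le hp e hN

/-- The relative error of a faithful rounding is at most `2 ^ (1 - p)`, which is at most `1 / 32`
as soon as `p ≥ 6`; this crude bound is all that the argument needs. -/
lemma Faithful.rel {p : ℕ} (hp : 6 ≤ p) {x y : ℝ} (h : Faithful p x y) :
    |y - x| ≤ |x| / 32 := by
  by_cases hx : x = 0
  · subst hx
    rw [h.eq_of_mem (zero_mem_Fp p)]
    simp
  · obtain ⟨e, h1, h2⟩ := exists_binade (p := p) (by omega) hx
    obtain ⟨N, -, -, hd⟩ := h.spec (by omega) h1 h2
    have h32 : (32 : ℝ) ≤ 2 ^ (p - 1) := by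
      calc (32 : ℝ) = 2 ^ 5 := by norm_num
        _ ≤ 2 ^ (p - 1) := pow_le_pow_right₀ (by norm_num) (by omega)
    have : (32 : ℝ) * 2 ^ e ≤ 2 ^ (p - 1) * 2 ^ e :=
      mul_le_mul_of_nonneg_right h32 (by positivity)
    linarith

/-- Nonzero floating-point numbers have a normalized representation. -/
lemma exists_normalized {p : ℕ} (hp : 1 ≤ p) {x : ℝ} (hx : x ∈ Fp p) (h0 : x ≠ 0) :
    ∃ M e : ℤ, x = M * 2 ^ e ∧ (2 : ℝ) ^ (p - 1) * 2 ^ e ≤ |x| ∧ |x| < (2 : ℝ) ^ p * 2 ^ e := by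
  obtain ⟨e, h1, h2⟩ := exists_binade hp h0
  have hf : Faithful p x x := Or.inl (RD_eq_self hx).symm
  obtain ⟨N, hN, -, -⟩ := hf.spec hp h1 h2
  exact ⟨N, e, hN, h1, h2⟩

lemma exists_int_mul_of_le {M e k : ℤ} (h : k ≤ e) :
    ∃ N : ℤ, (M : ℝ) * 2 ^ e = N * 2 ^ k := by
  obtain ⟨n, rfl⟩ := Int.le.dest h
  refine ⟨M * 2 ^ n, ?_⟩
  rw [zpow_add₀ (by norm_num), zpow_natCast]; push_cast; ring

lemma abs_int_lt_of_mul_lt {K e : ℤ} {n : ℕ} (h : |(K : ℝ) * 2 ^ e| < 2 ^ n * 2 ^ e) :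
    |K| < 2 ^ n := by
  have he : (0 : ℝ) < 2 ^ e := by positivity
  rw [abs_mul, abs_of_pos he] at h
  have := lt_of_mul_lt_mul_right h he.le
  exact_mod_cast this

/-! ### Fast2Sum and the two regimes of the leading sum -/

/-- Fast2Sum is exact in faithful rounding when the first operand is smaller than the second but
is a multiple of its unit in the last place: the error of the first addition is then at most one
such unit, so that all later differences are representable. -/
lemma fast2Sum_exact {p : ℕ} (hp : 1 ≤ p) {a w zh d zl : ℝ} {N M k : ℤ}
    (ha : a = N * 2 ^ k) (hw : w = M * 2 ^ k) (hM : |M| < 2 ^ p) (hNM : |N| < |M|)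
    (hzh : Faithful p (a + w) zh) (hd : Faithful p (zh - a) d) (hzl : Faithful p (w - d) zl) :
    zh + zl = a + w := by
  have hk : (0 : ℝ) < 2 ^ k := by positivity
  have hsum : a + w = ((N + M : ℤ) : ℝ) * 2 ^ k := by rw [ha, hw]; push_cast; ring
  have habs : |a + w| = ((|N + M| : ℤ) : ℝ) * 2 ^ k := by
    rw [hsum, abs_mul, abs_of_pos hk, Int.cast_abs]
  -- In both cases `zh` differs from the exact sum by at most one unit `2 ^ k`.
  obtain ⟨r, hr, hz⟩ : ∃ r : ℤ, |r| ≤ 1 ∧ zh = ((N + M + r : ℤ) : ℝ) * 2 ^ k := by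
    rcases le_or_gt |N + M| (2 ^ p) with h | h
    · refine ⟨0, by simp, ?_⟩
      rw [hzh.eq_of_mem (by rw [hsum]; exact mem_Fp_of_abs_le hp k h), hsum, add_zero]
    · have hk1 : (2 : ℝ) ^ (k + 1) = 2 * 2 ^ k := by
        rw [zpow_add_one₀ (by norm_num)]; ring
      have hpp : (2 : ℝ) ^ p = 2 * 2 ^ (p - 1) := by
        rw [← pow_succ']; congr 1; omega
      have hlow : (2 : ℝ) ^ p ≤ ((|N + M| : ℤ) : ℝ) := by exact_mod_cast h.le
      have hupp : ((|N + M| : ℤ) : ℝ) < 2 * 2 ^ p := by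
        have : |N + M| < 2 * 2 ^ p := by
          have := abs_add_le N M
          omega
        exact_mod_cast this
      obtain ⟨Z, hZ, -, hdist⟩ := hzh.spec (e := k + 1) hp
        (by rw [habs, hk1]
            have := mul_le_mul_of_nonneg_right hlow hk.le
            rw [hpp] at this; linarith)
        (by rw [habs, hk1]
            have := mul_lt_mul_of_pos_right hupp hk
            linarith)
      refine ⟨2 * Z - (N + M), ?_, ?_⟩
      · have e1 : zh - (a + w) = ((2 * Z - (N + M) : ℤ) : ℝ) * 2 ^ k := by
          rw [hZ, hsum, hk1]; push_cast; ring
        rw [e1, hk1] at hdist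
        have := abs_int_lt_of_mul_lt (n := 1) (by rwa [pow_one])
        omega
      · rw [hZ, hk1]; push_cast; ring
  have hde : d = ((M + r : ℤ) : ℝ) * 2 ^ k := by
    have e1 : zh - a = ((M + r : ℤ) : ℝ) * 2 ^ k := by rw [hz, ha]; push_cast; ring
    rw [hd.eq_of_mem (by
      rw [e1]
      refine mem_Fp_of_abs_le hp k ?_
      have := abs_add_le M r
      omega), e1]
  have hzle : zl = ((-r : ℤ) : ℝ) * 2 ^ k := by
    have e1 : w - d = ((-r : ℤ) : ℝ) * 2 ^ k := by rw [hw, hde]; push_cast; ring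
    have h1 : (1 : ℤ) ≤ 2 ^ p := one_le_pow₀ (by norm_num)
    rw [hzl.eq_of_mem (by
      rw [e1]
      refine mem_Fp_of_abs_le hp k ?_
      rw [abs_neg]; omega), e1]
  rw [hz, hzle, hsum]; push_cast; ring

/-- Without strong cancellation in `xh + yh`, the correction term stays below the leading sum. -/
lemma abs_w_le_of_no_cancellation {p : ℕ} (hp : 6 ≤ p)
    {xh xl yh yl sh a' b' da db sl v w : ℝ}
    (hx : |xl| ≤ |xh| / 8) (hy : |yl| ≤ |yh| / 8)
    (hcx : |xh| ≤ 2 * |xh + yh|) (hcy : |yh| ≤ 2 * |xh + yh|)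
    (h1 : Faithful p (xh + yh) sh) (h2 : Faithful p (sh - yh) a')
    (h3 : Faithful p (sh - a') b') (h4 : Faithful p (xh - a') da)
    (h5 : Faithful p (yh - b') db) (h6 : Faithful p (da + db) sl)
    (h7 : Faithful p (xl + yl) v) (h8 : Faithful p (sl + v) w) : |w| ≤ |sh| := by
  have r1 := h1.rel hp
  have r2 := h2.rel hp
  have r3 := h3.rel hp
  have r4 := h4.rel hp
  have r5 := h5.rel hp
  have r6 := h6.rel hp
  have r7 := h7.rel hp
  have r8 := h8.rel hp
  have hS : |xh| + |yh| ≤ 3 * |xh + yh| := by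
    rcases abs_cases xh with ⟨e1, _⟩ | ⟨e1, _⟩ <;> rcases abs_cases yh with ⟨e2, _⟩ | ⟨e2, _⟩ <;>
      rcases abs_cases (xh + yh) with ⟨e3, _⟩ | ⟨e3, _⟩ <;> rw [e1, e3] at hcx <;>
      rw [e2, e3] at hcy <;> rw [e1, e2, e3] <;> linarith
  have t1 : |xh + yh| ≤ |sh| + |sh - (xh + yh)| := by
    have := abs_sub_abs_le_abs_sub (xh + yh) sh
    rw [abs_sub_comm] at this; linarith
  have t2 : |sh - yh| ≤ |xh| + |sh - (xh + yh)| := by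
    have := abs_add_le xh (sh - (xh + yh))
    rwa [show xh + (sh - (xh + yh)) = sh - yh by ring] at this
  have t3 : |sh - a'| ≤ |yh| + |a' - (sh - yh)| := by
    have := abs_sub yh (a' - (sh - yh))
    rwa [show yh - (a' - (sh - yh)) = sh - a' by ring] at this
  have t4 : |xh - a'| ≤ |sh - (xh + yh)| + |a' - (sh - yh)| := by
    have := abs_add_le (sh - (xh + yh)) (a' - (sh - yh))
    rwa [show sh - (xh + yh) + (a' - (sh - yh)) = -(xh - a') by ring, abs_neg] at this
  have t5 : |yh - b'| ≤ |a' - (sh - yh)| + |b' - (sh - a')| := by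
    have := abs_sub (a' - (sh - yh)) (b' - (sh - a'))
    rwa [show a' - (sh - yh) - (b' - (sh - a')) = yh - b' by ring] at this
  -- Each rounded value exceeds its argument by a factor of at most `33 / 32` in absolute value.
  have grow : ∀ {s t : ℝ}, |t - s| ≤ |s| / 32 → |t| ≤ |s| * (33 / 32) := by
    intro s t h
    have := abs_sub_abs_le_abs_sub t s
    linarith
  have g4 := grow r4
  have g5 := grow r5
  have g6 := grow r6
  have g7 := grow r7
  have g8 := grow r8
  have a6 := abs_add_le da db
  have a7 := abs_add_le xl yl
  have a8 := abs_add_le sl v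
  have hs := abs_nonneg (xh + yh)
  linarith

theorem sloppy_normalization_exact_of_w_gt_sh
    (p : ℕ) (hp : 6 ≤ p) (u : ℝ) (hu : u = (2 : ℝ) ^ (1 - (p : ℤ)))
    (ox oy : ℝ) (hox1 : 1 ≤ ox) (hox2 : ox ≤ 1 / (8 * u) - 2)
    (hoy1 : 1 ≤ oy) (hoy2 : oy ≤ 1 / (8 * u) - 2)
    (xh xl yh yl : ℝ)
    (hxh : xh ∈ Fp p) (hxl : xl ∈ Fp p) (hyh : yh ∈ Fp p) (hyl : yl ∈ Fp p)
    (hovx : |xl| ≤ ox * u * |xh|) (hovy : |yl| ≤ oy * u * |yh|)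
    (sh a' b' da db sl v w zh d zl : ℝ)
    (hrun : SloppyFaithful p xh xl yh yl sh a' b' da db sl v w zh d zl) :
    |sh| < |w| → zh + zl = sh + w := by
  intro hlt
  obtain ⟨h1, h2, h3, h4, h5, h6, h7, h8, h9, h10, h11⟩ := hrun
  have hp1 : 1 ≤ p := by omega
  have hupos : 0 < u := by rw [hu]; positivity
  -- The overlap hypotheses are only used through `|xl| ≤ |xh| / 8` and `|yl| ≤ |yh| / 8`.
  have small : ∀ o : ℝ, o ≤ 1 / (8 * u) - 2 → o * u ≤ 1 / 8 := by
    intro o ho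
    have hm := mul_le_mul_of_nonneg_right ho hupos.le
    have he : (1 / (8 * u) - 2) * u = 1 / 8 - 2 * u := by field_simp
    linarith
  have hx : |xl| ≤ |xh| / 8 := by
    have := mul_le_mul_of_nonneg_right (small ox hox2) (abs_nonneg xh)
    linarith
  have hy : |yl| ≤ |yh| / 8 := by
    have := mul_le_mul_of_nonneg_right (small oy hoy2) (abs_nonneg yh)
    linarith
  by_cases hc : |xh| ≤ 2 * |xh + yh| ∧ |yh| ≤ 2 * |xh + yh|
  · exact absurd hlt (not_lt.2
      (abs_w_le_of_no_cancellation hp hx hy hc.1 hc.2 h1 h2 h3 h4 h5 h6 h7 h8))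
  -- Strong cancellation: the operands have opposite signs and are within a factor of two.
  have hc' : 2 * |xh + yh| < |xh| ∨ 2 * |xh + yh| < |yh| := by
    rcases not_and_or.1 hc with h | h
    · exact Or.inl (not_le.1 h)
    · exact Or.inr (not_le.1 h)
  have tx : |xh| ≤ |xh + yh| + |yh| := by
    have := abs_sub (xh + yh) yh
    rwa [add_sub_cancel_right] at this
  have ty : |yh| ≤ |xh + yh| + |xh| := by
    have := abs_sub (xh + yh) xh
    rwa [add_sub_cancel_left] at this
  have hs0 := abs_nonneg (xh + yh)
  have bxy : |xh| ≤ 2 * |yh| := by rcases hc' with h | h <;> linarith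
  have byx : |yh| ≤ 2 * |xh| := by rcases hc' with h | h <;> linarith
  have bsx : |xh + yh| ≤ |xh| := by rcases hc' with h | h <;> linarith
  have bsy : |xh + yh| ≤ |yh| := by rcases hc' with h | h <;> linarith
  have hx0 : xh ≠ 0 := by
    rintro rfl
    rw [abs_zero] at *
    rcases hc' with h | h <;> linarith
  have hy0 : yh ≠ 0 := by
    rintro rfl
    rw [abs_zero] at *
    rcases hc' with h | h <;> linarith
  obtain ⟨X, e, hX, -, hXu⟩ := exists_normalized hp1 hxh hx0
  obtain ⟨Y, f, hY, -, hYu⟩ := exists_normalized hp1 hyh hy0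
  -- With `g` the smaller exponent, `xh + yh` is a multiple of `2 ^ g`, and the smaller of `|xh|`
  -- and `|yh|` is less than `2 ^ p * 2 ^ g`.
  obtain ⟨g, K, hK, hmin⟩ : ∃ g K : ℤ, xh + yh = K * 2 ^ g ∧
      (|xh| < (2 : ℝ) ^ p * 2 ^ g ∨ |yh| < (2 : ℝ) ^ p * 2 ^ g) := by
    rcases le_total e f with h | h
    · obtain ⟨N, hN⟩ := exists_int_mul_of_le (M := Y) h
      refine ⟨e, X + N, ?_, Or.inl hXu⟩
      rw [hY, hN, hX]; push_cast; ring
    · obtain ⟨N, hN⟩ := exists_int_mul_of_le (M := X) h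
      refine ⟨f, N + Y, ?_, Or.inr hYu⟩
      rw [hX, hN, hY]; push_cast; ring
  -- The leading sum is exact (Sterbenz), hence so is the whole 2Sum, with error term zero.
  have hsmem : xh + yh ∈ Fp p := by
    have hKlt : |K| < 2 ^ p := by
      apply abs_int_lt_of_mul_lt (e := g)
      rw [← hK]
      rcases hmin with h | h <;> linarith
    rw [hK]
    exact mem_Fp_of_abs_le hp1 g hKlt.le
  have hsh : sh = xh + yh := h1.eq_of_mem hsmem
  have ha : a' = xh := by
    have e1 : sh - yh = xh := by rw [hsh]; ring
    rw [e1] at h2; exact h2.eq_of_mem hxh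
  have hb : b' = yh := by
    have e1 : sh - a' = yh := by rw [hsh, ha]; ring
    rw [e1] at h3; exact h3.eq_of_mem hyh
  have hda : da = 0 := by
    rw [ha, sub_self] at h4; exact h4.eq_of_mem (zero_mem_Fp p)
  have hdb : db = 0 := by
    rw [hb, sub_self] at h5; exact h5.eq_of_mem (zero_mem_Fp p)
  have hsl : sl = 0 := by
    rw [hda, hdb, add_zero] at h6; exact h6.eq_of_mem (zero_mem_Fp p)
  have hwv : w = v := by
    rw [hsl, zero_add] at h8; exact h8.eq_of_mem (h7.mem hp1)
  have hwbound : |w| ≤ (33 / 32) * ((|xh| + |yh|) / 8) := by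
    rw [hwv]
    have r := h7.rel hp
    have t := abs_sub_abs_le_abs_sub v (xl + yl)
    have t' := abs_add_le xl yl
    linarith
  have hw0 : w ≠ 0 := by
    rintro rfl
    rw [abs_zero] at hlt
    linarith [abs_nonneg sh]
  obtain ⟨M, k, hM, hMl, hMu⟩ := exists_normalized hp1 (h8.mem hp1) hw0
  -- Since `|w| < 2 ^ p * 2 ^ g`, its normalized exponent does not exceed `g`, so `sh` is a multiple of
  -- the unit in the last place of `w`.
  have hkg : k ≤ g := by
    by_contra hgk
    have hle : (2 : ℝ) ^ (g + 1) ≤ 2 ^ k := zpow_le_zpow_right₀ (by norm_num) (by omega)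
    have hg1 : (2 : ℝ) ^ (g + 1) = 2 * 2 ^ g := by
      rw [zpow_add_one₀ (by norm_num)]; ring
    have hpp : (2 : ℝ) ^ p = 2 * 2 ^ (p - 1) := by
      rw [← pow_succ']; congr 1; omega
    have hm := mul_le_mul_of_nonneg_left hle (by positivity : (0 : ℝ) ≤ 2 ^ (p - 1))
    rw [hg1] at hm
    rw [hpp] at hmin
    rcases hmin with h | h <;> linarith
  obtain ⟨N, hN⟩ := exists_int_mul_of_le (M := K) hkg
  have hshN : sh = N * 2 ^ k := by rw [hsh, hK, hN]
  have hNM : |N| < |M| := by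
    have hk : (0 : ℝ) < 2 ^ k := by positivity
    rw [hshN, hM, abs_mul, abs_mul, abs_of_pos hk] at hlt
    have := lt_of_mul_lt_mul_right hlt hk.le
    exact_mod_cast this
  exact fast2Sum_exact hp1 hshN hM (abs_int_lt_of_mul_lt (hM ▸ hMu)) hNM h9 h10 h11
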